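/- Let Δ ∈ ℝᵈ satisfy ‖Δ‖₁ ≤ 2ε and |Δᵢ| ≤ 1 for all i, with 2ε < d. Then for any q ≥ 1, Σᵢ |Δᵢ|^q ≤ ⌊2ε⌋ + (2ε − ⌊2ε⌋)^q. -/

import Mathlib

open scoped BigOperators

/-!
Let `G c` be the sum of `f` over the vector with `⌊c⌋` entries `1` and one entry `fract c`. For `f`
convex on `[0, 1]` with `f 0 = 0`, the function `G` extends `f` and is superadditive: pushing
`a, b ∈ [0, 1]` apart with `a + b` fixed increases `f a + f b`, up to the pair `0, a + b` or the
pair `1, a + b - 1`. Superadditivity gives `∑ f (x i) = ∑ G (x i) ≤ G (∑ x i)`, and, for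
`0 ≤ f`, it makes `G` monotone.
-/

theorem combo_add_combo_swap {R M : Type*} [Semiring R] [AddCommMonoid M] [Module R M] {v w : R}
    (hvw : v + w = 1) (x y : M) : (v • x + w • y) + (w • x + v • y) = x + y := by
  rw [add_add_add_comm, ← add_smul, ← add_smul, add_comm w v, hvw, one_smul, one_smul]

theorem add_le_add_of_convexOn_of_mem_segment {𝕜 E β : Type*} [Semiring 𝕜] [PartialOrder 𝕜]
    [AddCommGroup E] [Module 𝕜 E] [AddCommMonoid β] [PartialOrder β] [IsOrderedAddMonoid β]
    [Module 𝕜 β] {s : Set E} {f : E → β} {a b c d : E} (hf : ConvexOn 𝕜 s f) (hc : c ∈ s)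
    (hd : d ∈ s) (ha : a ∈ segment 𝕜 c d) (hab : a + b = c + d) : f a + f b ≤ f c + f d := by
  obtain ⟨v, w, hv, hw, hvw, rfl⟩ := ha
  obtain rfl : b = w • c + v • d :=
    add_left_cancel (hab.trans (combo_add_combo_swap hvw c d).symm)
  calc
    f (v • c + w • d) + f (w • c + v • d)
        ≤ (v • f c + w • f d) + (w • f c + v • f d) :=
      add_le_add (hf.2 hc hd hv hw hvw) (hf.2 hc hd hw hv ((add_comm w v).trans hvw))
    _ = f c + f d := combo_add_combo_swap hvw _ _

section GreedySum

variable {R β : Type*} [Ring R] [LinearOrder R] [FloorRing R] [AddCommGroup β]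

/-- The sum of `f` over the greedy splitting of `c` into parts of size at most one, namely `⌊c⌋`
parts `1` and one part `fract c`. The formula is used for negative `c` as well, so that
superadditivity needs no sign condition. -/
def greedySum (f : R → β) (c : R) : β :=
  ⌊c⌋ • f 1 + f (Int.fract c)

variable [IsStrictOrderedRing R] {f : R → β} {c : R}

theorem greedySum_add_intCast (f : R → β) (c : R) (n : ℤ) :
    greedySum f (c + n) = greedySum f c + n • f 1 := by
  rw [greedySum, greedySum, Int.floor_add_intCast, Int.fract_add_intCast, add_smul,
    add_right_comm]

theorem greedySum_eq_of_mem_Icc (hf0 : f 0 = 0)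
    (hc : c ∈ Set.Icc (0 : R) 1) : greedySum f c = f c := by
  rcases hc.2.eq_or_lt with rfl | hc1
  · simp [greedySum, hf0]
  · simp [greedySum, Int.floor_eq_zero_iff.2 ⟨hc.1, hc1⟩, Int.fract_eq_self.2 ⟨hc.1, hc1⟩]

variable [PartialOrder β] [IsOrderedAddMonoid β]

theorem greedySum_nonneg (hf : ∀ t ∈ Set.Icc (0 : R) 1, 0 ≤ f t) (hc : 0 ≤ c) :
    0 ≤ greedySum f c :=
  add_nonneg (zsmul_nonneg (hf 1 ⟨zero_le_one, le_rfl⟩) (Int.floor_nonneg.2 hc))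
    (hf _ ⟨Int.fract_nonneg c, (Int.fract_lt_one c).le⟩)

end GreedySum

section ConvexGreedySum

variable {𝕜 β : Type*} [Field 𝕜] [LinearOrder 𝕜] [IsStrictOrderedRing 𝕜] [FloorRing 𝕜]
  [AddCommGroup β] [PartialOrder β] [IsOrderedAddMonoid β] [Module 𝕜 β] {f : 𝕜 → β}

theorem add_le_greedySum_add {a b : 𝕜} (hf : ConvexOn 𝕜 (Set.Icc 0 1) f) (hf0 : f 0 = 0)
    (ha : a ∈ Set.Icc (0 : 𝕜) 1) (hb : b ∈ Set.Icc (0 : 𝕜) 1) :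
    f a + f b ≤ greedySum f (a + b) := by
  obtain ⟨ha0, ha1⟩ := ha
  obtain ⟨hb0, hb1⟩ := hb
  rcases le_total (a + b) 1 with hab | hab
  · have hmem : a + b ∈ Set.Icc (0 : 𝕜) 1 := ⟨add_nonneg ha0 hb0, hab⟩
    have ha_mem : a ∈ segment 𝕜 0 (a + b) :=
      Icc_subset_segment ⟨ha0, le_add_of_nonneg_right hb0⟩
    calc
      f a + f b ≤ f 0 + f (a + b) :=
        add_le_add_of_convexOn_of_mem_segment hf ⟨le_rfl, zero_le_one⟩ hmem ha_mem
          (zero_add _).symm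
      _ = greedySum f (a + b) := by rw [hf0, zero_add, greedySum_eq_of_mem_Icc hf0 hmem]
  · have hmem : a + b - 1 ∈ Set.Icc (0 : 𝕜) 1 := ⟨by linarith, by linarith⟩
    have ha_mem : a ∈ segment 𝕜 (a + b - 1) 1 := Icc_subset_segment ⟨by linarith, ha1⟩
    calc
      f a + f b ≤ f (a + b - 1) + f 1 :=
        add_le_add_of_convexOn_of_mem_segment hf hmem ⟨zero_le_one, le_rfl⟩ ha_mem
          (sub_add_cancel _ _).symm
      _ = greedySum f (a + b - 1 + (1 : ℤ)) := by
        rw [greedySum_add_intCast, greedySum_eq_of_mem_Icc hf0 hmem, one_smul]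
      _ = greedySum f (a + b) := by rw [Int.cast_one, sub_add_cancel]

theorem greedySum_add_le (hf : ConvexOn 𝕜 (Set.Icc 0 1) f) (hf0 : f 0 = 0) (c d : 𝕜) :
    greedySum f c + greedySum f d ≤ greedySum f (c + d) := by
  have fract_mem (t : 𝕜) : Int.fract t ∈ Set.Icc (0 : 𝕜) 1 :=
    ⟨Int.fract_nonneg t, (Int.fract_lt_one t).le⟩
  calc
    greedySum f c + greedySum f d
        = f (Int.fract c) + f (Int.fract d) + (⌊c⌋ + ⌊d⌋) • f 1 := by
      rw [greedySum, greedySum, add_smul]; abel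
    _ ≤ greedySum f (Int.fract c + Int.fract d) + (⌊c⌋ + ⌊d⌋) • f 1 := by
      gcongr
      exact add_le_greedySum_add hf hf0 (fract_mem c) (fract_mem d)
    _ = greedySum f (Int.fract c + Int.fract d + (⌊c⌋ + ⌊d⌋ : ℤ)) :=
      (greedySum_add_intCast f _ _).symm
    _ = greedySum f (c + d) := by
      rw [Int.cast_add, add_add_add_comm, Int.fract_add_floor, Int.fract_add_floor]

theorem greedySum_mono (hf : ConvexOn 𝕜 (Set.Icc 0 1) f) (hf0 : f 0 = 0)
    (hf_nonneg : ∀ t ∈ Set.Icc (0 : 𝕜) 1, 0 ≤ f t) : Monotone (greedySum f) := fun c d hcd ↦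
  calc
    greedySum f c ≤ greedySum f c + greedySum f (d - c) :=
      le_add_of_nonneg_right (greedySum_nonneg hf_nonneg (sub_nonneg.2 hcd))
    _ ≤ greedySum f (c + (d - c)) := greedySum_add_le hf hf0 c (d - c)
    _ = greedySum f d := by rw [add_sub_cancel]

theorem sum_le_greedySum_sum {ι : Type*} {s : Finset ι} {x : ι → 𝕜}
    (hf : ConvexOn 𝕜 (Set.Icc 0 1) f) (hf0 : f 0 = 0) (hx : ∀ i ∈ s, x i ∈ Set.Icc (0 : 𝕜) 1) :
    ∑ i ∈ s, f (x i) ≤ greedySum f (∑ i ∈ s, x i) := by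
  have greedySum_zero : greedySum f 0 = 0 := by
    rw [greedySum_eq_of_mem_Icc hf0 ⟨le_rfl, zero_le_one⟩, hf0]
  have superadditive := greedySum_add_le hf hf0
  calc
    ∑ i ∈ s, f (x i) = ∑ i ∈ s, greedySum f (x i) :=
      Finset.sum_congr rfl fun i hi ↦ (greedySum_eq_of_mem_Icc hf0 (hx i hi)).symm
    _ ≤ greedySum f (∑ i ∈ s, x i) :=
      Finset.le_sum_of_subadditive (N := βᵒᵈ) (greedySum f) greedySum_zero.ge superadditive s x

theorem l1_perturbation_diff_power_sum_le_general {ι : Type*} {s : Finset ι} {x : ι → 𝕜} {c : 𝕜}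
    (hf : ConvexOn 𝕜 (Set.Icc 0 1) f) (hf0 : f 0 = 0)
    (hf_nonneg : ∀ t ∈ Set.Icc (0 : 𝕜) 1, 0 ≤ f t) (hx : ∀ i ∈ s, x i ∈ Set.Icc (0 : 𝕜) 1)
    (hsum : ∑ i ∈ s, x i ≤ c) : ∑ i ∈ s, f (x i) ≤ ⌊c⌋ • f 1 + f (Int.fract c) :=
  (sum_le_greedySum_sum hf hf0 hx).trans (greedySum_mono hf hf0 hf_nonneg hsum)

end ConvexGreedySum

/-- l₁-budget case: bound on the coordinate-wise `q`-power sum. -/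
theorem l1_perturbation_diff_power_sum_le
    {d : ℕ} (Δ : Fin d → ℝ) (ε : ℝ) (hε : 0 < ε) (hεd : 2 * ε < d)
    (hl1 : ∑ i, |Δ i| ≤ 2 * ε) (hbox : ∀ i, |Δ i| ≤ 1)
    (q : ℝ) (hq : 1 ≤ q) :
    (∑ i, |Δ i| ^ q) ≤ (⌊2 * ε⌋ : ℝ) + (2 * ε - ⌊2 * ε⌋) ^ q := by
  have rpow_convexOn : ConvexOn ℝ (Set.Icc 0 1) fun t : ℝ ↦ t ^ q :=
    (convexOn_rpow hq).subset Set.Icc_subset_Ici_self (convex_Icc 0 1)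
  simpa using l1_perturbation_diff_power_sum_le_general rpow_convexOn
    (Real.zero_rpow (by linarith)) (fun t ht ↦ Real.rpow_nonneg ht.1 q)
    (fun i _ ↦ ⟨abs_nonneg (Δ i), hbox i⟩) hl1
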